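/- Let ε > 0, Re > 0, Bo > 0 be real parameters. Suppose u, v, w, p : ℝ² × [0,1] × ℝ → ℝ and η : ℝ² × ℝ → ℝ are smooth functions satisfying the fully linearized system: in the volume ℝ² × [0,1] × ℝ, u_t − (√ε/Re)(u_xx + ε u_yy + u_zz/ε) + p_x = 0, v_t − (√ε/Re)(v_xx + ε v_yy + v_zz/ε) + √ε p_y = 0, w_t − (√ε/Re)(w_xx + ε w_yy + w_zz/ε) + p_z = 0, u_x + √ε v_y + w_z/ε = 0; on z = 1: u_z + w_x = 0, v_z + √ε w_y = 0, (η − p) + (2/(Re √ε)) w_z = (1/Bo)(η_xx + ε η_yy), η_t − w/ε = 0; and on z = 0: u = v = w = 0. Then w satisfies the four boundary conditions: w_z(x,y,0,t) = 0; w(x,y,0,t) = 0; w_zz − ε w_xx − ε² w_yy = 0 at z = 1; and w_xx + ε w_yy − w_ztt + (3√ε/Re)(w_xxzt + ε w_yyzt) + (1/(Re √ε)) w_zzzt = (1/Bo)(∂_x² + ε ∂_y²)² w at z = 1. -/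

import Mathlib

noncomputable section

/-- Partial derivative with respect to the first variable `x`. -/
def pdx (f : ℝ → ℝ → ℝ → ℝ → ℝ) : ℝ → ℝ → ℝ → ℝ → ℝ :=
  fun x y z t => deriv (fun x' => f x' y z t) x

/-- Partial derivative with respect to the second variable `y`. -/
def pdy (f : ℝ → ℝ → ℝ → ℝ → ℝ) : ℝ → ℝ → ℝ → ℝ → ℝ :=
  fun x y z t => deriv (fun y' => f x y' z t) y

/-- Partial derivative with respect to the third variable `z`. -/
def pdz (f : ℝ → ℝ → ℝ → ℝ → ℝ) : ℝ → ℝ → ℝ → ℝ → ℝ :=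
  fun x y z t => deriv (fun z' => f x y z' t) z

/-- Partial derivative with respect to the fourth variable `t`. -/
def pdt (f : ℝ → ℝ → ℝ → ℝ → ℝ) : ℝ → ℝ → ℝ → ℝ → ℝ :=
  fun x y z t => deriv (fun t' => f x y z t') t

/-- Partial derivative in `x` for functions of `(x, y, t)`. -/
def qdx (f : ℝ → ℝ → ℝ → ℝ) : ℝ → ℝ → ℝ → ℝ :=
  fun x y t => deriv (fun x' => f x' y t) x

/-- Partial derivative in `y` for functions of `(x, y, t)`. -/
def qdy (f : ℝ → ℝ → ℝ → ℝ) : ℝ → ℝ → ℝ → ℝ :=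
  fun x y t => deriv (fun y' => f x y' t) y

/-- Partial derivative in `t` for functions of `(x, y, t)`. -/
def qdt (f : ℝ → ℝ → ℝ → ℝ) : ℝ → ℝ → ℝ → ℝ :=
  fun x y t => deriv (fun t' => f x y t') t

/-- The operator `∂_x² + ε ∂_y²`. -/
def Pop (ε : ℝ) (f : ℝ → ℝ → ℝ → ℝ → ℝ) : ℝ → ℝ → ℝ → ℝ → ℝ :=
  fun x y z t => pdx (pdx f) x y z t + ε * pdy (pdy f) x y z t

/-! HELPERS -/

/-- Smooth functions on space-time. -/
def smoothV : Submodule ℝ (ℝ × ℝ × ℝ × ℝ → ℝ) where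
  carrier := {f | ContDiff ℝ (⊤ : ℕ∞) f}
  add_mem' := by
    intro f g hf hg
    rw [Set.mem_ofPred_eq] at *
    exact hf.add hg
  zero_mem' := by
    rw [Set.mem_ofPred_eq]
    exact contDiff_const
  smul_mem' := by
    intro c f hf
    rw [Set.mem_ofPred_eq] at *
    exact hf.const_smul c

theorem smoothV_cd (F : smoothV) : ContDiff ℝ (⊤ : ℕ∞) F.1 := by
  have h := F.2
  change F.1 ∈ {f | ContDiff ℝ (⊤ : ℕ∞) f} at h
  rwa [Set.mem_ofPred_eq] at h

theorem mem_smoothV {f : ℝ × ℝ × ℝ × ℝ → ℝ} (h : ContDiff ℝ (⊤ : ℕ∞) f) : f ∈ smoothV := by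
  change f ∈ {f | ContDiff ℝ (⊤ : ℕ∞) f}
  rwa [Set.mem_ofPred_eq]

theorem smoothV_diff (F : smoothV) (q : ℝ × ℝ × ℝ × ℝ) : DifferentiableAt ℝ F.1 q :=
  (ContDiff.differentiable (smoothV_cd F) (by simp)).differentiableAt

/-- Directional derivative as a linear operator. -/
def dirD (d : ℝ × ℝ × ℝ × ℝ) : smoothV →ₗ[ℝ] smoothV where
  toFun F := ⟨fun q => fderiv ℝ F.1 q d, mem_smoothV <|
    (ContDiff.fderiv_right (m := (⊤ : ℕ∞)) (smoothV_cd F) (by simp)).clm_apply contDiff_const⟩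
  map_add' F G := by
    ext q
    have := fderiv_add (smoothV_diff F q) (smoothV_diff G q)
    simp [this]
  map_smul' c F := by
    ext q
    have := fderiv_const_smul (smoothV_diff F q) c
    simp [this]

theorem dirD_comm (d e : ℝ × ℝ × ℝ × ℝ) (F : smoothV) :
    dirD d (dirD e F) = dirD e (dirD d F) := by
  ext q
  have hs : IsSymmSndFDerivAt ℝ F.1 q :=
    (ContDiff.contDiffAt (smoothV_cd F)).isSymmSndFDerivAt (by simpa using (WithTop.coe_le_coe.2 (le_top : (2 : ℕ∞) ≤ ⊤)))
  have hd : DifferentiableAt ℝ (fderiv ℝ F.1) q :=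
    ((ContDiff.fderiv_right (m := (⊤ : ℕ∞)) (smoothV_cd F) (by simp)).differentiable
      (by simp)).differentiableAt
  have key : ∀ a b : ℝ × ℝ × ℝ × ℝ,
      fderiv ℝ (fun q => fderiv ℝ F.1 q a) q b = fderiv ℝ (fderiv ℝ F.1) q b a := by
    intro a b
    rw [fderiv_clm_apply hd (differentiableAt_const a)]
    simp
  change fderiv ℝ (fun q => fderiv ℝ F.1 q e) q d = fderiv ℝ (fun q => fderiv ℝ F.1 q d) q e
  rw [key, key]
  exact hs d e

/-- Curried form. -/
def cu (F : smoothV) : ℝ → ℝ → ℝ → ℝ → ℝ := fun x y z t => F.1 (x, y, z, t)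

abbrev DX := dirD (1, 0, 0, 0)
abbrev DY := dirD (0, 1, 0, 0)
abbrev DZ := dirD (0, 0, 1, 0)
abbrev DT := dirD (0, 0, 0, 1)

theorem hasDerivAt_x (F : smoothV) (x y z t : ℝ) :
    HasDerivAt (fun s => cu F s y z t) (cu (DX F) x y z t) x := by
  have h1 := (smoothV_diff F (x, y, z, t)).hasFDerivAt
  have h2 :=
    ((hasDerivAt_id x).prodMk (hasDerivAt_const x (y, z, t)))
  exact HasFDerivAt.comp_hasDerivAt (f := fun x : ℝ => ((x, y, z, t) : ℝ × ℝ × ℝ × ℝ)) x h1 h2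

theorem hasDerivAt_y (F : smoothV) (x y z t : ℝ) :
    HasDerivAt (fun s => cu F x s z t) (cu (DY F) x y z t) y := by
  have h1 := (smoothV_diff F (x, y, z, t)).hasFDerivAt
  have h2 :=
    ((hasDerivAt_const y x).prodMk ((hasDerivAt_id y).prodMk (hasDerivAt_const y (z, t))))
  exact HasFDerivAt.comp_hasDerivAt (f := fun y : ℝ => ((x, y, z, t) : ℝ × ℝ × ℝ × ℝ)) y h1 h2

theorem hasDerivAt_z (F : smoothV) (x y z t : ℝ) :
    HasDerivAt (fun s => cu F x y s t) (cu (DZ F) x y z t) z := by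
  have h1 := (smoothV_diff F (x, y, z, t)).hasFDerivAt
  have h2 :=
    ((hasDerivAt_const z x).prodMk ((hasDerivAt_const z y).prodMk
      ((hasDerivAt_id z).prodMk (hasDerivAt_const z t))))
  exact HasFDerivAt.comp_hasDerivAt (f := fun z : ℝ => ((x, y, z, t) : ℝ × ℝ × ℝ × ℝ)) z h1 h2

theorem hasDerivAt_t (F : smoothV) (x y z t : ℝ) :
    HasDerivAt (fun s => cu F x y z s) (cu (DT F) x y z t) t := by
  have h1 := (smoothV_diff F (x, y, z, t)).hasFDerivAt
  have h2 :=
    ((hasDerivAt_const t x).prodMk ((hasDerivAt_const t y).prodMk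
      ((hasDerivAt_const t z).prodMk (hasDerivAt_id t))))
  exact HasFDerivAt.comp_hasDerivAt (f := fun t : ℝ => ((x, y, z, t) : ℝ × ℝ × ℝ × ℝ)) t h1 h2

theorem pdx_cu (F : smoothV) : pdx (cu F) = cu (DX F) := by
  funext x y z t; exact (hasDerivAt_x F x y z t).deriv
theorem pdy_cu (F : smoothV) : pdy (cu F) = cu (DY F) := by
  funext x y z t; exact (hasDerivAt_y F x y z t).deriv
theorem pdz_cu (F : smoothV) : pdz (cu F) = cu (DZ F) := by
  funext x y z t; exact (hasDerivAt_z F x y z t).deriv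
theorem pdt_cu (F : smoothV) : pdt (cu F) = cu (DT F) := by
  funext x y z t; exact (hasDerivAt_t F x y z t).deriv

theorem cu_add (F G : smoothV) (x y z t : ℝ) :
    cu (F + G) x y z t = cu F x y z t + cu G x y z t := rfl
theorem cu_sub (F G : smoothV) (x y z t : ℝ) :
    cu (F - G) x y z t = cu F x y z t - cu G x y z t := rfl
theorem cu_smul (c : ℝ) (F : smoothV) (x y z t : ℝ) :
    cu (c • F) x y z t = c * cu F x y z t := rfl

theorem Pop_cu (ε : ℝ) (F : smoothV) : Pop ε (cu F) = cu (DX (DX F) + ε • DY (DY F)) := by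
  funext x y z t
  simp only [Pop, pdx_cu, pdy_cu, cu_add, cu_smul]

/-- Functions vanishing on the slab `z ∈ s`. -/
def vanish (s : Set ℝ) : Submodule ℝ smoothV where
  carrier := {F | ∀ x y t, ∀ z ∈ s, cu F x y z t = 0}
  add_mem' := fun ha hb x y t z hz => by rw [cu_add, ha x y t z hz, hb x y t z hz, add_zero]
  zero_mem' := fun _ _ _ _ _ => rfl
  smul_mem' := fun c F hF x y t z hz => by rw [cu_smul, hF x y t z hz, mul_zero]

theorem vanish_x {s : Set ℝ} {F : smoothV} (h : F ∈ vanish s) : DX F ∈ vanish s := by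
  intro x y t z hz
  have h1 := hasDerivAt_x F x y z t
  have h2 : (fun r => cu F r y z t) = fun _ => 0 := funext fun r => h r y t z hz
  rw [h2] at h1
  exact h1.unique (hasDerivAt_const x 0)

theorem vanish_y {s : Set ℝ} {F : smoothV} (h : F ∈ vanish s) : DY F ∈ vanish s := by
  intro x y t z hz
  have h1 := hasDerivAt_y F x y z t
  have h2 : (fun r => cu F x r z t) = fun _ => 0 := funext fun r => h x r t z hz
  rw [h2] at h1
  exact h1.unique (hasDerivAt_const y 0)

theorem vanish_t {s : Set ℝ} {F : smoothV} (h : F ∈ vanish s) : DT F ∈ vanish s := by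
  intro x y t z hz
  have h1 := hasDerivAt_t F x y z t
  have h2 : (fun r => cu F x y z r) = fun _ => 0 := funext fun r => h x y r z hz
  rw [h2] at h1
  exact h1.unique (hasDerivAt_const t 0)

theorem vanish_z {F : smoothV} (h : F ∈ vanish (Set.Icc 0 1)) :
    DZ F ∈ vanish (Set.Icc 0 1) := by
  intro x y t z hz
  have h1 := (hasDerivAt_z F x y z t).hasDerivWithinAt (s := Set.Icc 0 1)
  have h2 : HasDerivWithinAt (fun r => cu F x y r t) 0 (Set.Icc 0 1) z :=
    (hasDerivWithinAt_const z _ (0 : ℝ)).congr (fun r hr => h x y t r hr) (h x y t z hz)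
  exact (uniqueDiffOn_Icc zero_lt_one z hz).eq_deriv _ h1 h2

theorem vanish_mono {s r : Set ℝ} (hsr : s ⊆ r) {F : smoothV} (h : F ∈ vanish r) :
    F ∈ vanish s := fun x y t z hz => h x y t z (hsr hz)

theorem exists_cu (f : ℝ → ℝ → ℝ → ℝ → ℝ)
    (hf : ContDiff ℝ (⊤ : ℕ∞) (fun q : ℝ × ℝ × ℝ × ℝ => f q.1 q.2.1 q.2.2.1 q.2.2.2)) :
    ∃ F : smoothV, f = cu F := ⟨⟨_, mem_smoothV hf⟩, rfl⟩


theorem boundary_conditions_for_w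
    (ε Re Bo : ℝ) (hε : 0 < ε) (hRe : 0 < Re) (hBo : 0 < Bo)
    (u v w p : ℝ → ℝ → ℝ → ℝ → ℝ) (η : ℝ → ℝ → ℝ → ℝ)
    (hu : ContDiff ℝ (⊤ : ℕ∞) (fun q : ℝ × ℝ × ℝ × ℝ => u q.1 q.2.1 q.2.2.1 q.2.2.2))
    (hv : ContDiff ℝ (⊤ : ℕ∞) (fun q : ℝ × ℝ × ℝ × ℝ => v q.1 q.2.1 q.2.2.1 q.2.2.2))
    (hw : ContDiff ℝ (⊤ : ℕ∞) (fun q : ℝ × ℝ × ℝ × ℝ => w q.1 q.2.1 q.2.2.1 q.2.2.2))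
    (hp : ContDiff ℝ (⊤ : ℕ∞) (fun q : ℝ × ℝ × ℝ × ℝ => p q.1 q.2.1 q.2.2.1 q.2.2.2))
    (hη : ContDiff ℝ (⊤ : ℕ∞) (fun q : ℝ × ℝ × ℝ => η q.1 q.2.1 q.2.2))
    (hequ : ∀ (x y t : ℝ), ∀ z ∈ Set.Icc (0:ℝ) 1,
      pdt u x y z t - (Real.sqrt ε / Re) *
        (pdx (pdx u) x y z t + ε * pdy (pdy u) x y z t + pdz (pdz u) x y z t / ε)
        + pdx p x y z t = 0)
    (heqv : ∀ (x y t : ℝ), ∀ z ∈ Set.Icc (0:ℝ) 1,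
      pdt v x y z t - (Real.sqrt ε / Re) *
        (pdx (pdx v) x y z t + ε * pdy (pdy v) x y z t + pdz (pdz v) x y z t / ε)
        + Real.sqrt ε * pdy p x y z t = 0)
    (heqw : ∀ (x y t : ℝ), ∀ z ∈ Set.Icc (0:ℝ) 1,
      pdt w x y z t - (Real.sqrt ε / Re) *
        (pdx (pdx w) x y z t + ε * pdy (pdy w) x y z t + pdz (pdz w) x y z t / ε)
        + pdz p x y z t = 0)
    (hdiv : ∀ (x y t : ℝ), ∀ z ∈ Set.Icc (0:ℝ) 1,
      pdx u x y z t + Real.sqrt ε * pdy v x y z t + pdz w x y z t / ε = 0)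
    (hbc1 : ∀ (x y t : ℝ), pdz u x y 1 t + pdx w x y 1 t = 0)
    (hbc2 : ∀ (x y t : ℝ), pdz v x y 1 t + Real.sqrt ε * pdy w x y 1 t = 0)
    (hbc3 : ∀ (x y t : ℝ),
      (η x y t - p x y 1 t) + (2 / (Re * Real.sqrt ε)) * pdz w x y 1 t
        = (1 / Bo) * (qdx (qdx η) x y t + ε * qdy (qdy η) x y t))
    (hkin : ∀ (x y t : ℝ), qdt η x y t - w x y 1 t / ε = 0)
    (hbot : ∀ (x y t : ℝ), u x y 0 t = 0 ∧ v x y 0 t = 0 ∧ w x y 0 t = 0) :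
    ∀ (x y t : ℝ),
      pdz w x y 0 t = 0 ∧
      w x y 0 t = 0 ∧
      pdz (pdz w) x y 1 t - ε * pdx (pdx w) x y 1 t - ε ^ 2 * pdy (pdy w) x y 1 t = 0 ∧
      pdx (pdx w) x y 1 t + ε * pdy (pdy w) x y 1 t - pdt (pdt (pdz w)) x y 1 t
        + (3 * Real.sqrt ε / Re) *
          (pdt (pdz (pdx (pdx w))) x y 1 t + ε * pdt (pdz (pdy (pdy w))) x y 1 t)
        + (1 / (Re * Real.sqrt ε)) * pdt (pdz (pdz (pdz w))) x y 1 t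
        = (1 / Bo) * Pop ε (Pop ε w) x y 1 t := by
  obtain ⟨U, rfl⟩ := exists_cu _ hu
  obtain ⟨V, rfl⟩ := exists_cu _ hv
  obtain ⟨W, rfl⟩ := exists_cu _ hw
  obtain ⟨Q, rfl⟩ := exists_cu _ hp
  have hH' : ContDiff ℝ (⊤ : ℕ∞) (fun q : ℝ × ℝ × ℝ × ℝ =>
      (fun x y (_ : ℝ) t => η x y t) q.1 q.2.1 q.2.2.1 q.2.2.2) := by
    have hl : ContDiff ℝ (⊤ : ℕ∞)
        (fun q : ℝ × ℝ × ℝ × ℝ => ((q.1, q.2.1, q.2.2.2) : ℝ × ℝ × ℝ)) := by fun_prop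
    exact hη.comp hl
  obtain ⟨H, hH⟩ := exists_cu (fun x y (_ : ℝ) t => η x y t) hH'
  have hxx : ∀ x y t, qdx (qdx η) x y t = cu (DX (DX H)) x y 1 t := by
    intro x y t
    rw [← pdx_cu, ← pdx_cu, ← hH]; rfl
  have hyy : ∀ x y t, qdy (qdy η) x y t = cu (DY (DY H)) x y 1 t := by
    intro x y t
    rw [← pdy_cu, ← pdy_cu, ← hH]; rfl
  have ht : ∀ x y t, qdt η x y t = cu (DT H) x y 1 t := by
    intro x y t
    rw [← pdt_cu, ← hH]; rfl
  have h0 : ∀ x y t, η x y t = cu H x y 1 t := by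
    intro x y t
    rw [← hH]
  simp only [hxx, hyy, ht, h0] at hbc3 hkin
  simp only [pdx_cu, pdy_cu, pdz_cu, pdt_cu, Pop_cu] at *
  obtain ⟨s, hs, rfl⟩ : ∃ s : ℝ, 0 < s ∧ ε = s ^ 2 :=
    ⟨Real.sqrt ε, Real.sqrt_pos.2 hε, (Real.sq_sqrt hε.le).symm⟩
  rw [Real.sqrt_sq hs.le] at *
  have mU : DT U - (s / Re) • (DX (DX U) + s ^ 2 • DY (DY U) + (1 / s ^ 2) • DZ (DZ U)) + DX Q
      ∈ vanish (Set.Icc 0 1) := by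
    intro x y t z hz
    simp only [cu_add, cu_sub, cu_smul]
    rw [← hequ x y t z hz]; ring
  have mV : DT V - (s / Re) • (DX (DX V) + s ^ 2 • DY (DY V) + (1 / s ^ 2) • DZ (DZ V))
      + s • DY Q ∈ vanish (Set.Icc 0 1) := by
    intro x y t z hz
    simp only [cu_add, cu_sub, cu_smul]
    rw [← heqv x y t z hz]; ring
  have mD : DX U + s • DY V + (1 / s ^ 2) • DZ W ∈ vanish (Set.Icc 0 1) := by
    intro x y t z hz
    simp only [cu_add, cu_sub, cu_smul]
    rw [← hdiv x y t z hz]; ring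
  have m1 : DZ U + DX W ∈ vanish {1} := by
    rintro x y t z rfl
    simp only [cu_add, cu_sub, cu_smul]
    exact hbc1 x y t
  have m2 : DZ V + s • DY W ∈ vanish {1} := by
    rintro x y t z rfl
    simp only [cu_add, cu_sub, cu_smul]
    exact hbc2 x y t
  have m3 : H - Q + (2 / (Re * s)) • DZ W - (1 / Bo) • (DX (DX H) + s ^ 2 • DY (DY H))
      ∈ vanish {1} := by
    rintro x y t z rfl
    simp only [cu_add, cu_sub, cu_smul]
    rw [hbc3 x y t]; ring
  have m4 : DT H - (1 / s ^ 2) • W ∈ vanish {1} := by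
    rintro x y t z rfl
    simp only [cu_add, cu_sub, cu_smul]
    rw [← hkin x y t]; ring
  have b1 : U ∈ vanish {0} := by
    rintro x y t z rfl
    exact (hbot x y t).1
  have b2 : V ∈ vanish {0} := by
    rintro x y t z rfl
    exact (hbot x y t).2.1
  have i0 : ({0} : Set ℝ) ⊆ Set.Icc 0 1 := by simp
  have i1 : ({1} : Set ℝ) ⊆ Set.Icc 0 1 := by simp
  have hs0 : s ≠ 0 := hs.ne'
  have hRe0 : Re ≠ 0 := hRe.ne'
  have hBo0 : Bo ≠ 0 := hBo.ne'
  have cYX := dirD_comm (0, 1, 0, 0) (1, 0, 0, 0)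
  have cZX := dirD_comm (0, 0, 1, 0) (1, 0, 0, 0)
  have cTX := dirD_comm (0, 0, 0, 1) (1, 0, 0, 0)
  have cZY := dirD_comm (0, 0, 1, 0) (0, 1, 0, 0)
  have cTY := dirD_comm (0, 0, 0, 1) (0, 1, 0, 0)
  have cTZ := dirD_comm (0, 0, 0, 1) (0, 0, 1, 0)
  have r1 : DZ W ∈ vanish {0} := by
    have e : DZ W = s ^ 2 • ((DX U + s • DY V + (1 / s ^ 2) • DZ W) - DX U - s • DY V) := by
      match_scalars <;> field_simp <;> ring
    rw [e]
    exact Submodule.smul_mem _ _ (sub_mem (sub_mem (vanish_mono i0 mD) (vanish_x b1))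
      (Submodule.smul_mem _ _ (vanish_y b2)))
  have r3 : DZ (DZ W) - s ^ 2 • DX (DX W) - (s ^ 2) ^ 2 • DY (DY W) ∈ vanish {1} := by
    have e : DZ (DZ W) - s ^ 2 • DX (DX W) - (s ^ 2) ^ 2 • DY (DY W)
        = s ^ 2 • (DZ (DX U + s • DY V + (1 / s ^ 2) • DZ W) - DX (DZ U + DX W)
          - s • DY (DZ V + s • DY W)) := by
      simp only [map_add, map_sub, map_smul, cYX, cZX, cTX, cZY, cTY, cTZ]
      match_scalars <;> field_simp <;> ring
    rw [e]
    exact Submodule.smul_mem _ _ (sub_mem (sub_mem (vanish_mono i1 (vanish_z mD)) (vanish_x m1))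
      (Submodule.smul_mem _ _ (vanish_y m2)))
  let P : smoothV → smoothV := fun F => DX (DX F) + s ^ 2 • DY (DY F)
  have hP : ∀ F, F ∈ vanish {1} → P F ∈ vanish {1} := fun F hF =>
    add_mem (vanish_x (vanish_x hF)) (Submodule.smul_mem _ _ (vanish_y (vanish_y hF)))
  have r4 : DX (DX W) + s ^ 2 • DY (DY W) - DT (DT (DZ W))
      + (3 * s / Re) • (DT (DZ (DX (DX W))) + s ^ 2 • DT (DZ (DY (DY W))))
      + (1 / (Re * s)) • DT (DZ (DZ (DZ W)))
      - (1 / Bo) • (DX (DX (DX (DX W) + s ^ 2 • DY (DY W)))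
        + s ^ 2 • DY (DY (DX (DX W) + s ^ 2 • DY (DY W)))) ∈ vanish {1} := by
    have a1 := vanish_mono i1 (vanish_t (add_mem (vanish_x mU)
      (Submodule.smul_mem _ s (vanish_y mV))))
    have a2 := vanish_mono i1 (vanish_t (vanish_t mD))
    have a3 := hP _ (vanish_mono i1 (vanish_t mD))
    have a4 := vanish_mono i1 (vanish_t (vanish_z (vanish_z mD)))
    have a5 := hP _ (vanish_t m3)
    have a6 := hP _ m4
    have a7 := hP _ a6
    have fin := Submodule.smul_mem _ (s ^ 2) (add_mem (sub_mem (add_mem (add_mem (sub_mem a1 a2)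
      (Submodule.smul_mem _ (s / Re) a3)) (Submodule.smul_mem _ (s / Re * (1 / s ^ 2)) a4))
      a6) (Submodule.smul_mem _ (1 / Bo) a7))
    have fin2 := add_mem fin (Submodule.smul_mem _ (s ^ 2) a5)
    convert fin2 using 1
    simp only [P, map_add, map_sub, map_smul, cYX, cZX, cTX, cZY, cTY, cTZ]
    match_scalars <;> field_simp <;> ring
  intro x y t
  refine ⟨r1 x y t 0 rfl, (hbot x y t).2.2, ?_, ?_⟩
  · have := r3 x y t 1 rfl
    simpa only [cu_add, cu_sub, cu_smul] using this
  · have := r4 x y t 1 rfl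
    simp only [cu_add, cu_sub, cu_smul] at this ⊢
    linarith
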